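/- Let T > 0, let γ : [0,T] → ℝⁿ be four times continuously differentiable, assume the kernel function K(x,y) = ⟪k y, k x⟫ is four times continuously differentiable on ℝⁿ × ℝⁿ, and let Γ_γ ∈ H be the occupation kernel of γ. Then there exists a constant C ≥ 0 such that for every even integer F ≥ 2, setting h := T/F, t_i := i·h for i = 0,…,F, and Γ̂ := (h/3)·( k(γ t₀) + 4·Σ_{i=1}^{F/2} k(γ t_{2i−1}) + 2·Σ_{i=1}^{F/2−1} k(γ t_{2i}) + k(γ t_F) ) (the Simpson's rule approximation), one has ‖Γ_γ − Γ̂‖² ≤ C · h⁴. -/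

import Mathlib

open scoped RealInnerProductSpace

/-!
Write `S` for Simpson's rule and `e = Γ - S v`, where `v = k ∘ γ`. For each `g : H`, the number
`⟪g, e⟫` is the error of Simpson's rule for the scalar function `t ↦ ⟪g, v t⟫`. Taking `g = v s`,
the classical error estimate applied to the slices of the Gram function `⟪v s, v t⟫` shows that
`⟪e, v s⟫ = O(h⁴)` uniformly in `s`. Taking `g = e`, whose error is at most twice the length of the
interval times the supremum of `|⟪e, v s⟫|`, then gives `‖e‖² = O(h⁴)`.
-/

open Finset MeasureTheory Set

section SimpsonRule

variable {E F : Type*} [AddCommGroup E] [Module ℝ E] [AddCommGroup F] [Module ℝ F]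

/-- The `j`-th endpoint of the partition of `[a, b]` into `m` intervals of equal length. -/
noncomputable def uniformPartition (a b : ℝ) (m j : ℕ) : ℝ := a + j * ((b - a) / m)

/-- Simpson's rule with a single panel: the integral over `[a, b]` of the quadratic polynomial that
agrees with `f` at `a`, at `b` and at the midpoint. -/
noncomputable def simpsonPanel (f : ℝ → E) (a b : ℝ) : E :=
  ((b - a) / 6) • (f a + (4 : ℝ) • f ((a + b) / 2) + f b)

/-- The composite Simpson rule on `[a, b]` with `N` subintervals, that is, `N / 2` panels. It is
meaningful for even `N ≥ 2` only. -/
noncomputable def compositeSimpson (f : ℝ → E) (a b : ℝ) (N : ℕ) : E :=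
  ((b - a) / N / 3) •
    (f a
      + (4 : ℝ) • ∑ i ∈ Finset.Icc 1 (N / 2), f (a + ((2 * i - 1 : ℕ) : ℝ) * ((b - a) / N))
      + (2 : ℝ) • ∑ i ∈ Finset.Icc 1 (N / 2 - 1), f (a + ((2 * i : ℕ) : ℝ) * ((b - a) / N))
      + f b)

theorem uniformPartition_zero (a b : ℝ) (m : ℕ) : uniformPartition a b m 0 = a := by
  simp [uniformPartition]

theorem uniformPartition_self (a b : ℝ) {m : ℕ} (hm : m ≠ 0) : uniformPartition a b m m = b := by
  rw [uniformPartition, mul_div_cancel₀ _ (Nat.cast_ne_zero.2 hm), add_sub_cancel]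

theorem uniformPartition_succ_sub (a b : ℝ) (m j : ℕ) :
    uniformPartition a b m (j + 1) - uniformPartition a b m j = (b - a) / m := by
  simp only [uniformPartition, Nat.cast_succ]
  ring

theorem uniformPartition_monotone {a b : ℝ} (hab : a ≤ b) (m : ℕ) :
    Monotone (uniformPartition a b m) := by
  refine monotone_nat_of_le_succ fun j => ?_
  rw [← sub_nonneg, uniformPartition_succ_sub]
  exact div_nonneg (sub_nonneg.2 hab) m.cast_nonneg

theorem uniformPartition_lt_succ {a b : ℝ} (hab : a < b) {m : ℕ} (hm : m ≠ 0) (j : ℕ) :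
    uniformPartition a b m j < uniformPartition a b m (j + 1) := by
  rw [← sub_pos, uniformPartition_succ_sub]
  exact div_pos (sub_pos.2 hab) (Nat.cast_pos.2 (Nat.pos_of_ne_zero hm))

theorem Icc_uniformPartition_subset {a b : ℝ} (hab : a ≤ b) {m j : ℕ} (hj : j < m) :
    Icc (uniformPartition a b m j) (uniformPartition a b m (j + 1)) ⊆ Icc a b := by
  have hmono := uniformPartition_monotone hab m
  refine Icc_subset_Icc ?_ ?_
  · exact (uniformPartition_zero a b m).symm.trans_le (hmono j.zero_le)
  · exact (hmono (Nat.succ_le_of_lt hj)).trans_eq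
      (uniformPartition_self a b (Nat.ne_zero_of_lt hj))

theorem simpsonPanel_sub (f g : ℝ → E) (a b : ℝ) :
    simpsonPanel (fun x => f x - g x) a b = simpsonPanel f a b - simpsonPanel g a b := by
  simp only [simpsonPanel]
  module

theorem map_compositeSimpson (L : E →ₗ[ℝ] F) (f : ℝ → E) (a b : ℝ) (N : ℕ) :
    L (compositeSimpson f a b N) = compositeSimpson (fun x => L (f x)) a b N := by
  simp only [compositeSimpson, map_smul, map_add, map_sum]

theorem sum_four_odd_add_two_even (y : ℕ → E) (m : ℕ) :
    y 0 + (4 : ℝ) • ∑ i ∈ Finset.Icc 1 (m + 1), y (2 * i - 1)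
        + (2 : ℝ) • ∑ i ∈ Finset.Icc 1 m, y (2 * i) + y (2 * (m + 1))
      = ∑ j ∈ range (m + 1), (y (2 * j) + (4 : ℝ) • y (2 * j + 1) + y (2 * (j + 1))) := by
  induction m with
  | zero => simp
  | succ m ih =>
    have hodd : 2 * (m + 1 + 1) - 1 = 2 * (m + 1) + 1 := by lia
    rw [sum_range_succ, ← ih, sum_Icc_succ_top (by lia : 1 ≤ m + 1 + 1),
      sum_Icc_succ_top (by lia : 1 ≤ m + 1) (fun i => y (2 * i)), hodd]
    module

theorem compositeSimpson_two_mul (f : ℝ → E) (a b : ℝ) (m : ℕ) :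
    compositeSimpson f a b (2 * m)
      = ∑ j ∈ range m,
          simpsonPanel f (uniformPartition a b m j) (uniformPartition a b m (j + 1)) := by
  obtain _ | m := m
  · simp [compositeSimpson]
  set h : ℝ := (b - a) / (2 * (m + 1) : ℕ) with h_def
  have hwidth : (b - a) / (m + 1 : ℕ) = 2 * h := by
    rw [h_def]
    push_cast
    field
  have hend : a + (2 * (m + 1) : ℕ) * h = b := by
    rw [h_def]
    push_cast
    field
  have hpanel (j : ℕ) : simpsonPanel f (uniformPartition a b (m + 1) j)
      (uniformPartition a b (m + 1) (j + 1))
        = (h / 3) • (f (a + (2 * j : ℕ) * h) + (4 : ℝ) • f (a + (2 * j + 1 : ℕ) * h)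
            + f (a + (2 * (j + 1) : ℕ) * h)) := by
    rw [simpsonPanel, uniformPartition_succ_sub]
    simp only [uniformPartition, hwidth]
    push_cast
    ring_nf
  have hsum := sum_four_odd_add_two_even (fun i : ℕ => f (a + i * h)) m
  simp only [hend, Nat.cast_zero, zero_mul, add_zero] at hsum
  rw [compositeSimpson, ← h_def, Nat.mul_div_cancel_left _ two_pos, Nat.add_sub_cancel, hsum,
    smul_sum]
  exact sum_congr rfl fun j _ => (hpanel j).symm

end SimpsonRule

section ErrorEstimates

variable {E : Type*} [NormedAddCommGroup E] [NormedSpace ℝ E] {f : ℝ → E} {a b B M : ℝ}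

theorem norm_intervalIntegral_le_of_forall_mem_Icc (hab : a ≤ b)
    (hf : ∀ x ∈ Icc a b, ‖f x‖ ≤ B) : ‖∫ x in a..b, f x‖ ≤ (b - a) * B := by
  have h := intervalIntegral.norm_integral_le_of_norm_le_const fun x hx =>
    hf x (Ioc_subset_Icc_self (uIoc_of_le hab ▸ hx))
  rwa [abs_of_nonneg (sub_nonneg.2 hab), mul_comm] at h

theorem norm_simpsonPanel_le (hab : a ≤ b) (hf : ∀ x ∈ Icc a b, ‖f x‖ ≤ B) :
    ‖simpsonPanel f a b‖ ≤ (b - a) * B := by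
  have hlen : 0 ≤ (b - a) / 6 := by linarith
  have hmid : (a + b) / 2 ∈ Icc a b := ⟨by linarith, by linarith⟩
  calc ‖simpsonPanel f a b‖
      = (b - a) / 6 * ‖f a + (4 : ℝ) • f ((a + b) / 2) + f b‖ := by
        rw [simpsonPanel, norm_smul, Real.norm_of_nonneg hlen]
    _ ≤ (b - a) / 6 * (‖f a‖ + 4 * ‖f ((a + b) / 2)‖ + ‖f b‖) := by
        gcongr
        refine norm_add₃_le.trans_eq ?_
        rw [norm_smul, Real.norm_ofNat]
    _ ≤ (b - a) / 6 * (B + 4 * B + B) := by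
        gcongr
        exacts [hf a (left_mem_Icc.2 hab), hf _ hmid, hf b (right_mem_Icc.2 hab)]
    _ = (b - a) * B := by ring

theorem norm_compositeSimpson_two_mul_le (hab : a ≤ b) {m : ℕ} (hm : m ≠ 0)
    (hf : ∀ x ∈ Icc a b, ‖f x‖ ≤ B) : ‖compositeSimpson f a b (2 * m)‖ ≤ (b - a) * B := by
  rw [compositeSimpson_two_mul]
  calc ‖∑ j ∈ range m, simpsonPanel f (uniformPartition a b m j) (uniformPartition a b m (j + 1))‖
      ≤ ∑ _j ∈ range m, (b - a) / m * B := norm_sum_le_of_le _ fun j hj => by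
        rw [← uniformPartition_succ_sub a b m j]
        exact norm_simpsonPanel_le (uniformPartition_monotone hab m j.le_succ)
          fun x hx => hf x (Icc_uniformPartition_subset hab (Finset.mem_range.1 hj) hx)
    _ = (b - a) * B := by
        rw [sum_const, card_range, nsmul_eq_mul]
        field

theorem iteratedDerivWithin_eq_of_subset {s t : Set ℝ} {n : ℕ} {x : ℝ} (hst : s ⊆ t)
    (hs : UniqueDiffOn ℝ s) (ht : UniqueDiffOn ℝ t) (hf : ContDiffOn ℝ n f t) (hx : x ∈ s) :
    iteratedDerivWithin n f s x = iteratedDerivWithin n f t x := by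
  rw [iteratedDerivWithin, iteratedDerivWithin, iteratedFDerivWithin_subset hst hs ht hf hx]

section Complete

variable [CompleteSpace E]

theorem integral_cubic_eq_simpsonPanel (c : ℕ → E) (a b : ℝ) :
    ∫ x in a..b, ∑ i ∈ range 4, (x - a) ^ i • c i
      = simpsonPanel (fun x => ∑ i ∈ range 4, (x - a) ^ i • c i) a b := by
  have hmonomial (i : ℕ) :
      ∫ x in a..b, (x - a) ^ i • c i = ((b - a) ^ (i + 1) / (i + 1)) • c i := by
    rw [intervalIntegral.integral_smul_const,
      intervalIntegral.integral_comp_sub_right (fun x => x ^ i), integral_pow, sub_self,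
      zero_pow i.succ_ne_zero, sub_zero]
  rw [intervalIntegral.integral_finsetSum fun i _ =>
    Continuous.intervalIntegrable (by fun_prop) a b]
  simp only [hmonomial, simpsonPanel, sum_range_succ, range_zero, sum_empty, zero_add, pow_zero,
    sub_self, ne_eq, OfNat.ofNat_ne_zero, one_ne_zero, not_false_eq_true, zero_pow]
  push_cast
  module

theorem integral_taylorWithinEval_three (f : ℝ → E) (s : Set ℝ) (a b : ℝ) :
    ∫ x in a..b, taylorWithinEval f 3 s a x = simpsonPanel (taylorWithinEval f 3 s a) a b := by
  have hpoly : taylorWithinEval f 3 s a = fun x => ∑ i ∈ range 4,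
      (x - a) ^ i • (i.factorial : ℝ)⁻¹ • iteratedDerivWithin i f s a := by
    ext x
    simp only [taylor_within_apply, smul_smul, mul_comm]
  rw [hpoly]
  exact integral_cubic_eq_simpsonPanel _ a b

/-- The constant is not optimal: it comes from splitting off the cubic Taylor polynomial at `a`, for
which Simpson's rule is exact, and bounding the integral of the remainder and its Simpson value
separately. -/
theorem norm_integral_sub_simpsonPanel_le (hab : a ≤ b) (hf : ContDiffOn ℝ 4 f (Icc a b))
    (hM : ∀ x ∈ Icc a b, ‖iteratedDerivWithin 4 f (Icc a b) x‖ ≤ M) :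
    ‖(∫ x in a..b, f x) - simpsonPanel f a b‖ ≤ M * (b - a) ^ 5 / 3 := by
  have hM₀ : 0 ≤ M := (norm_nonneg _).trans (hM a (left_mem_Icc.2 hab))
  set p : ℝ → E := taylorWithinEval f 3 (Icc a b) a
  have hremainder : ∀ x ∈ Icc a b, ‖f x - p x‖ ≤ M * (b - a) ^ 4 / 6 := fun x hx => calc
    ‖f x - p x‖ ≤ M * (x - a) ^ 4 / 6 :=
      (taylor_mean_remainder_bound (n := 3) hab (mod_cast hf) hx hM).trans_eq
        (by norm_num [Nat.factorial])
    _ ≤ M * (b - a) ^ 4 / 6 := by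
      have := sub_nonneg.2 hx.1
      gcongr
      exact hx.2
  have hfint : IntervalIntegrable f volume a b :=
    hf.continuousOn.intervalIntegrable_of_Icc hab
  have hpint : IntervalIntegrable p volume a b := by
    refine Continuous.intervalIntegrable ?_ a b
    simp only [p, funext (taylor_within_apply f 3 (Icc a b) a)]
    fun_prop
  have herror : (∫ x in a..b, f x) - simpsonPanel f a b
      = (∫ x in a..b, (f x - p x)) - simpsonPanel (fun x => f x - p x) a b := by
    rw [intervalIntegral.integral_sub hfint hpint, simpsonPanel_sub,
      integral_taylorWithinEval_three, sub_sub_sub_cancel_right]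
  calc ‖(∫ x in a..b, f x) - simpsonPanel f a b‖
      ≤ (b - a) * (M * (b - a) ^ 4 / 6) + (b - a) * (M * (b - a) ^ 4 / 6) := by
        rw [herror]
        exact norm_sub_le_of_le (norm_intervalIntegral_le_of_forall_mem_Icc hab hremainder)
          (norm_simpsonPanel_le hab hremainder)
    _ = M * (b - a) ^ 5 / 3 := by ring

theorem norm_integral_sub_compositeSimpson_two_mul_le (hab : a < b)
    (hf : ContDiffOn ℝ 4 f (Icc a b))
    (hM : ∀ x ∈ Icc a b, ‖iteratedDerivWithin 4 f (Icc a b) x‖ ≤ M) {m : ℕ} (hm : m ≠ 0) :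
    ‖(∫ x in a..b, f x) - compositeSimpson f a b (2 * m)‖
      ≤ M * (b - a) / 3 * ((b - a) / m) ^ 4 := by
  set u := uniformPartition a b m
  have hlt (j : ℕ) : u j < u (j + 1) := uniformPartition_lt_succ hab hm j
  have hsub {j : ℕ} (hj : j < m) : Icc (u j) (u (j + 1)) ⊆ Icc a b :=
    Icc_uniformPartition_subset hab.le hj
  have hint : ∫ x in a..b, f x = ∑ j ∈ range m, ∫ x in u j..u (j + 1), f x := by
    rw [intervalIntegral.sum_integral_adjacent_intervals fun j hj =>
      (hf.continuousOn.mono (hsub hj)).intervalIntegrable_of_Icc (hlt j).le]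
    simp only [u, uniformPartition_zero, uniformPartition_self a b hm]
  have hpanel : ∀ j ∈ range m,
      ‖(∫ x in u j..u (j + 1), f x) - simpsonPanel f (u j) (u (j + 1))‖
        ≤ M * ((b - a) / m) ^ 5 / 3 := by
    intro j hj
    have hsub := hsub (Finset.mem_range.1 hj)
    rw [← uniformPartition_succ_sub a b m j]
    refine norm_integral_sub_simpsonPanel_le (hlt j).le (hf.mono hsub) fun x hx => ?_
    rw [iteratedDerivWithin_eq_of_subset hsub (uniqueDiffOn_Icc (hlt j)) (uniqueDiffOn_Icc hab)
      hf hx]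
    exact hM x (hsub hx)
  calc ‖(∫ x in a..b, f x) - compositeSimpson f a b (2 * m)‖
      ≤ ∑ _j ∈ range m, M * ((b - a) / m) ^ 5 / 3 := by
        rw [hint, compositeSimpson_two_mul, ← sum_sub_distrib]
        exact norm_sum_le_of_le _ hpanel
    _ = M * (b - a) / 3 * ((b - a) / m) ^ 4 := by
        rw [sum_const, card_range, nsmul_eq_mul]
        field

end Complete

end ErrorEstimates

section Slices

variable {𝕜 E F G : Type*} [NontriviallyNormedField 𝕜] [NormedAddCommGroup E] [NormedSpace 𝕜 E]
  [NormedAddCommGroup F] [NormedSpace 𝕜 F] [NormedAddCommGroup G] [NormedSpace 𝕜 G]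

theorem iteratedFDerivWithin_prodMk_left {f : E × F → G} {s : Set E} {t : Set F} {n : ℕ}
    (hf : ContDiffOn 𝕜 n f (s ×ˢ t)) (hs : UniqueDiffOn 𝕜 s) (ht : UniqueDiffOn 𝕜 t)
    {x : E} (hx : x ∈ s) {y : F} (hy : y ∈ t) :
    iteratedFDerivWithin 𝕜 n (fun z => f (x, z)) t y
      = (iteratedFDerivWithin 𝕜 n f (s ×ˢ t) (x, y)).compContinuousLinearMap
          fun _ => ContinuousLinearMap.inr 𝕜 E F :=
  let slice : F →ᴬ[𝕜] E × F := (ContinuousAffineMap.const 𝕜 F x).prod (ContinuousAffineMap.id 𝕜 F)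
  have htaylor := ((hf.ftaylorSeriesWithin (hs.prod ht)).comp_continuousAffineMap slice).mono
    (fun _ hz => ⟨hx, hz⟩ : t ⊆ slice ⁻¹' s ×ˢ t)
  (htaylor.eq_iteratedFDerivWithin_of_uniqueDiffOn le_rfl ht hy).symm

theorem norm_iteratedFDerivWithin_prodMk_left_le {f : E × F → G} {s : Set E} {t : Set F} {n : ℕ}
    (hf : ContDiffOn 𝕜 n f (s ×ˢ t)) (hs : UniqueDiffOn 𝕜 s) (ht : UniqueDiffOn 𝕜 t)
    {x : E} (hx : x ∈ s) {y : F} (hy : y ∈ t) :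
    ‖iteratedFDerivWithin 𝕜 n (fun z => f (x, z)) t y‖
      ≤ ‖iteratedFDerivWithin 𝕜 n f (s ×ˢ t) (x, y)‖ := by
  rw [iteratedFDerivWithin_prodMk_left hf hs ht hx hy]
  refine (ContinuousMultilinearMap.norm_compContinuousLinearMap_le _ _).trans ?_
  exact mul_le_of_le_one_right (norm_nonneg _) <| prod_le_one (fun _ _ => norm_nonneg _)
    fun _ _ => ContinuousLinearMap.norm_inr_le_one 𝕜 E F

end Slices

section WeakIntegral

variable {H : Type*} [NormedAddCommGroup H] [InnerProductSpace ℝ H] {v : ℝ → H} {a b : ℝ} {Γ : H}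

theorem inner_sub_compositeSimpson (hΓ : ∀ g : H, ⟪g, Γ⟫ = ∫ t in a..b, ⟪g, v t⟫) (g : H)
    (N : ℕ) :
    ⟪g, Γ - compositeSimpson v a b N⟫
      = (∫ t in a..b, ⟪g, v t⟫) - compositeSimpson (fun t => ⟪g, v t⟫) a b N := by
  rw [inner_sub_right, hΓ]
  exact congrArg _ (map_compositeSimpson (innerₛₗ ℝ g) v a b N)

theorem sq_norm_sub_compositeSimpson_two_mul_le (hab : a ≤ b)
    (hΓ : ∀ g : H, ⟪g, Γ⟫ = ∫ t in a..b, ⟪g, v t⟫) {m : ℕ} (hm : m ≠ 0) {B : ℝ}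
    (hB : ∀ s ∈ Icc a b, ‖(∫ t in a..b, ⟪v s, v t⟫)
      - compositeSimpson (fun t => ⟪v s, v t⟫) a b (2 * m)‖ ≤ B) :
    ‖Γ - compositeSimpson v a b (2 * m)‖ ^ 2 ≤ 2 * (b - a) * B := by
  set e := Γ - compositeSimpson v a b (2 * m)
  have hinner : ∀ s ∈ Icc a b, ‖⟪e, v s⟫‖ ≤ B := fun s hs => by
    rw [real_inner_comm, inner_sub_compositeSimpson hΓ]
    exact hB s hs
  calc ‖e‖ ^ 2 = ⟪e, e⟫ := (real_inner_self_eq_norm_sq e).symm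
    _ ≤ ‖(∫ t in a..b, ⟪e, v t⟫) - compositeSimpson (fun t => ⟪e, v t⟫) a b (2 * m)‖ := by
        rw [← inner_sub_compositeSimpson hΓ]
        exact Real.le_norm_self _
    _ ≤ (b - a) * B + (b - a) * B :=
        norm_sub_le_of_le (norm_intervalIntegral_le_of_forall_mem_Icc hab hinner)
          (norm_compositeSimpson_two_mul_le hab hm hinner)
    _ = 2 * (b - a) * B := by ring

theorem occupation_kernel_simpsons_convergence_general (hab : a < b)
    (hv : ContDiffOn ℝ 4 (fun p : ℝ × ℝ => ⟪v p.1, v p.2⟫) (Icc a b ×ˢ Icc a b))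
    (hΓ : ∀ g : H, ⟪g, Γ⟫ = ∫ t in a..b, ⟪g, v t⟫) :
    ∃ C : ℝ, 0 ≤ C ∧ ∀ N : ℕ, 2 ≤ N → Even N →
      ‖Γ - compositeSimpson v a b N‖ ^ 2 ≤ C * ((b - a) / N) ^ 4 := by
  have hu : UniqueDiffOn ℝ (Icc a b) := uniqueDiffOn_Icc hab
  obtain ⟨M, hM⟩ := (isCompact_Icc.prod isCompact_Icc).exists_bound_of_continuousOn
    (hv.continuousOn_iteratedFDerivWithin (m := 4) le_rfl (hu.prod hu))
  have hslice : ∀ s ∈ Icc a b, ∀ t ∈ Icc a b,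
      ‖iteratedDerivWithin 4 (fun t => ⟪v s, v t⟫) (Icc a b) t‖ ≤ M := fun s hs t ht => by
    rw [← norm_iteratedFDerivWithin_eq_norm_iteratedDerivWithin]
    exact (norm_iteratedFDerivWithin_prodMk_left_le hv hu hu hs ht).trans (hM _ ⟨hs, ht⟩)
  have hM₀ : 0 ≤ M := (norm_nonneg _).trans
    (hM (a, a) ⟨left_mem_Icc.2 hab.le, left_mem_Icc.2 hab.le⟩)
  refine ⟨2 * (b - a) * (M * (b - a) / 3 * 2 ^ 4), ?_, fun N hN hN_even => ?_⟩
  · have := sub_pos.2 hab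
    positivity
  obtain ⟨m, rfl⟩ := hN_even.exists_two_nsmul
  have hm : m ≠ 0 := by lia
  calc ‖Γ - compositeSimpson v a b (2 * m)‖ ^ 2
      ≤ 2 * (b - a) * (M * (b - a) / 3 * ((b - a) / m) ^ 4) :=
        sq_norm_sub_compositeSimpson_two_mul_le hab.le hΓ hm fun s hs =>
          norm_integral_sub_compositeSimpson_two_mul_le hab
            (hv.comp (contDiffOn_const.prodMk contDiffOn_id) fun t ht => ⟨hs, ht⟩) (hslice s hs) hm
    _ = 2 * (b - a) * (M * (b - a) / 3 * 2 ^ 4) * ((b - a) / (2 * m : ℕ)) ^ 4 := by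
        push_cast
        field

end WeakIntegral

/-- Simpson's rule approximation of the occupation kernel: for a four-times continuously
differentiable trajectory and kernel, there is `C ≥ 0` such that for every even `F ≥ 2`,
with `h = T/F` and nodes `tᵢ = i·h`, the Simpson approximation
`Γ̂ = (h/3)(k(γ t₀) + 4 Σ k(γ t_{2i−1}) + 2 Σ k(γ t_{2i}) + k(γ t_F))` satisfies
`‖Γ − Γ̂‖² ≤ C h⁴`. -/
theorem occupation_kernel_simpsons_convergence
    {n : ℕ} (hn : 1 ≤ n) {H : Type*} [NormedAddCommGroup H] [InnerProductSpace ℝ H]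
    [CompleteSpace H]
    (ι : H →ₗ[ℝ] (EuclideanSpace ℝ (Fin n) → ℝ)) (hι : Function.Injective ι)
    (k : EuclideanSpace ℝ (Fin n) → H)
    (hrep : ∀ (g : H) (x : EuclideanSpace ℝ (Fin n)), ι g x = ⟪g, k x⟫)
    (hK : ContDiff ℝ 4 (fun p : EuclideanSpace ℝ (Fin n) × EuclideanSpace ℝ (Fin n) =>
      (⟪k p.2, k p.1⟫ : ℝ)))
    (T : ℝ) (hT : 0 < T)
    (γ : ℝ → EuclideanSpace ℝ (Fin n)) (hγ : ContDiffOn ℝ 4 γ (Set.Icc 0 T))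
    (Γ : H) (hΓ : ∀ g : H, ⟪g, Γ⟫ = ∫ t in (0:ℝ)..T, ι g (γ t)) :
    ∃ C : ℝ, 0 ≤ C ∧ ∀ (F : ℕ), 2 ≤ F → Even F →
      ‖Γ - (T / F / 3) •
        (k (γ 0)
          + (4 : ℝ) • ∑ i ∈ Finset.Icc 1 (F / 2), k (γ (((2 * i - 1 : ℕ) : ℝ) * (T / F)))
          + (2 : ℝ) • ∑ i ∈ Finset.Icc 1 (F / 2 - 1), k (γ (((2 * i : ℕ) : ℝ) * (T / F)))
          + k (γ T))‖ ^ 2 ≤ C * (T / F) ^ 4 := by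
  have hgram : ContDiffOn ℝ 4 (fun p : ℝ × ℝ => ⟪k (γ p.1), k (γ p.2)⟫) (Icc 0 T ×ˢ Icc 0 T) :=
    hK.comp_contDiffOn ((hγ.comp contDiffOn_snd fun _ hp => hp.2).prodMk
      (hγ.comp contDiffOn_fst fun _ hp => hp.1))
  simpa only [compositeSimpson, sub_zero, zero_add] using
    occupation_kernel_simpsons_convergence_general (v := fun t => k (γ t)) hT hgram
      (by simpa only [hrep] using hΓ)
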